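/- If k ≥ n/2 + 2 and the orphan ideal O of (A,d,ε) is (k−1)-half-acyclic (H^i(O) = 0 for n/2+1 ≤ i ≤ k−1), then the orphan ideal Ô of (Â,d̂,ε̂) is k-half-acyclic. -/

import Mathlib

namespace PDCDGA

variable {k : Type} [Field k]

/-- Graded commutativity with Koszul signs, together with the convention that
squares of odd-degree elements vanish (also in characteristic 2). -/
structure GradedComm {A : Type} [Ring A] [Algebra k A] (𝒜 : ℕ → Submodule k A) : Prop where
  mul_comm : ∀ (i j : ℕ) (a b : A), a ∈ 𝒜 i → b ∈ 𝒜 j →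
    a * b = ((-1 : k) ^ (i * j)) • (b * a)
  odd_sq : ∀ i : ℕ, Odd i → ∀ a ∈ 𝒜 i, a * a = 0

/-- A `k`-linear differential of degree `+1` satisfying the graded Leibniz rule. -/
structure IsDifferential {A : Type} [Ring A] [Algebra k A] (𝒜 : ℕ → Submodule k A)
    (d : A →ₗ[k] A) : Prop where
  grade : ∀ i : ℕ, ∀ a ∈ 𝒜 i, d a ∈ 𝒜 (i + 1)
  d_sq : ∀ a : A, d (d a) = 0
  leibniz : ∀ (i : ℕ) (a b : A), a ∈ 𝒜 i →
    d (a * b) = d a * b + ((-1 : k) ^ i) • (a * d b)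

/-- An orientation `ε : A → k`, concentrated in degree `n`, vanishing on boundaries
and inducing an epimorphism `Hⁿ(A) → k`. -/
structure IsOrientation {A : Type} [Ring A] [Algebra k A] (𝒜 : ℕ → Submodule k A)
    (d : A →ₗ[k] A) (n : ℕ) (ε : A →ₗ[k] k) : Prop where
  homog : ∀ i : ℕ, i ≠ n → ∀ a ∈ 𝒜 i, ε a = 0
  eps_d : ∀ a : A, ε (d a) = 0
  exists_cocycle : ∃ μ : A, μ ∈ 𝒜 n ∧ d μ = 0 ∧ ε μ = 1

/-- The orphan ideal `O = {a | ∀ b, ε (a·b) = 0}` (as a `k`-submodule). -/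
def Orphans {A : Type} [Ring A] [Algebra k A] (ε : A →ₗ[k] k) : Submodule k A :=
  ⨅ b : A, LinearMap.ker (ε ∘ₗ LinearMap.mulRight k b)

lemma mem_orphans {A : Type} [Ring A] [Algebra k A] (ε : A →ₗ[k] k) (a : A) :
    a ∈ Orphans ε ↔ ∀ b : A, ε (a * b) = 0 := by
  simp [Orphans]

/-- `H^*(A,d)` is a Poincaré duality algebra in dimension `n` with respect to the
orientation `ε`: every nonzero cohomology class pairs nontrivially with some class
in the complementary degree. -/
def CohomologyPD {A : Type} [Ring A] [Algebra k A] (𝒜 : ℕ → Submodule k A)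
    (d : A →ₗ[k] A) (n : ℕ) (ε : A →ₗ[k] k) : Prop :=
  ∀ (i : ℕ) (a : A), a ∈ 𝒜 i → d a = 0 → a ∉ LinearMap.range d →
    ∃ (j : ℕ) (b : A), i + j = n ∧ b ∈ 𝒜 j ∧ d b = 0 ∧ ε (a * b) ≠ 0

/-- The orphan ideal is `N`-half-acyclic: `Hⁱ(O) = 0` for `n/2 + 1 ≤ i ≤ N`
(the condition `n/2 + 1 ≤ i` is written as `n + 2 ≤ 2 * i`). -/
def OrphansHalfAcyclic {A : Type} [Ring A] [Algebra k A] (𝒜 : ℕ → Submodule k A)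
    (d : A →ₗ[k] A) (n : ℕ) (ε : A →ₗ[k] k) (N : ℕ) : Prop :=
  ∀ i : ℕ, n + 2 ≤ 2 * i → i ≤ N → ∀ a : A, a ∈ Orphans ε → a ∈ 𝒜 i → d a = 0 →
    ∃ b : A, b ∈ Orphans ε ∧ b ∈ 𝒜 (i - 1) ∧ a = d b

/-- A chain map is a quasi-isomorphism: it induces a bijection on cohomology. -/
def IsQuasiIso {A B : Type} [Ring A] [Algebra k A] [Ring B] [Algebra k B]
    (d : A →ₗ[k] A) (D : B →ₗ[k] B) (f : A → B) : Prop :=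
  (∀ a : A, d a = 0 → (∃ b : B, f a = D b) → ∃ a' : A, a = d a') ∧
  (∀ x : B, D x = 0 → ∃ (a : A) (b : B), d a = 0 ∧ x = f a + D b)

/-- Indices of the monomial basis of `Λ(c₁,…,c_l,w₁,…,w_l)`, where `c_i` has degree
`q+1` and `w_i` has degree `q`: exponents of odd-degree generators are at most 1. -/
def MonIdx (q l : ℕ) : Type :=
  {se : (Fin l → ℕ) × (Fin l → ℕ) //
    (Odd (q + 1) → ∀ i, se.1 i ≤ 1) ∧ (Odd q → ∀ i, se.2 i ≤ 1)}

/-- The monomial `c₁^{s₁} ⋯ c_l^{s_l} · w₁^{e₁} ⋯ w_l^{e_l}`. -/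
def monomial {B : Type} [Monoid B] {l : ℕ} (c w : Fin l → B)
    (μ : (Fin l → ℕ) × (Fin l → ℕ)) : B :=
  (((List.finRange l).map fun i => c i ^ μ.1 i).prod) *
    (((List.finRange l).map fun i => w i ^ μ.2 i).prod)

/-!
In degrees up to `q + 2 < 2 * q`, an element of the free extension `B` is
`j a + ∑ t_s c_s + ∑ j (r_s) w_s`. Let it be an orphan cocycle. As `D w_s = c_s - j γ_s` and the
`r_s`, being of degree at most `2`, are cocycles, the coefficient of `c_s` in its differential is
`± r_s`, so `r_s = 0`. Then `a` is an orphan with `d (a + ∑ t_s γ_s) = 0`, and the independence of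
the classes of `d γ_s` in the cohomology of the orphan ideal forces `t_s = 0`. So the element is
`j a` for an orphan cocycle `a` of `A`.

In degree `q + 2`, write `a = d b + ∑ t_s d γ_s`; then `j a` is the differential of the orphan
`j b + ∑ t_s c_s`. In lower degrees `a` has a primitive in the orphan ideal, which can be taken in
`Z`; since `Z` pairs to zero with the `w_s`, it stays an orphan in `B`.
-/

section Graded

open DirectSum

variable {ι R M : Type*} [DecidableEq ι] [Semiring R] [AddCommMonoid M] [Module R M]
  (ℳ : ι → Submodule R M) [Decomposition ℳ]

lemma coe_decompose_map_add_degree {N : Type*} [Add ι] [IsRightCancelAdd ι] [AddCommMonoid N]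
    [Module R N] (𝒩 : ι → Submodule R N) [Decomposition 𝒩] (f : M →ₗ[R] N) {e : ι}
    (hf : ∀ i, ∀ x ∈ ℳ i, f x ∈ 𝒩 (i + e)) (x : M) (i : ι) :
    (decompose 𝒩 (f x) (i + e) : N) = f (decompose ℳ x i) := by
  induction x using Decomposition.inductionOn ℳ with
  | zero => simp
  | @homogeneous t x =>
    have hfx := hf t x x.2
    by_cases hti : t = i
    · subst hti
      rw [decompose_of_mem_same 𝒩 hfx, decompose_of_mem_same ℳ x.2]
    · rw [decompose_of_mem_ne 𝒩 hfx (by simpa using hti), decompose_of_mem_ne ℳ x.2 hti, map_zero]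
  | add x y hx hy => simp [decompose_add, hx, hy]

end Graded

section Monomials

variable {l : ℕ}

/-- The degree of the monomial with exponents `μ`, for `c_i` of degree `q + 1` and `w_i` of
degree `q`. -/
def monomialDegree (q : ℕ) (μ : (Fin l → ℕ) × (Fin l → ℕ)) : ℕ :=
  (∑ i, μ.1 i) * (q + 1) + (∑ i, μ.2 i) * q

lemma exists_eq_single_of_sum_eq_one {m : Fin l → ℕ} (hm : ∑ i, m i = 1) :
    ∃ s, m = Pi.single s 1 := by
  obtain ⟨s, hs⟩ := (Finsupp.sum_eq_one_iff (Finsupp.equivFunOnFinite.symm m)).1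
    (by rwa [Finsupp.sum_fintype _ _ fun _ ↦ rfl])
  exact ⟨s, by simpa using congrArg Finsupp.equivFunOnFinite hs⟩

lemma exponent_linear_or_le_monomialDegree (q : ℕ) (μ : (Fin l → ℕ) × (Fin l → ℕ)) :
    μ = 0 ∨ (∃ s, μ = (Pi.single s 1, 0)) ∨ (∃ s, μ = (0, Pi.single s 1)) ∨
      2 * q ≤ monomialDegree q μ := by
  obtain ⟨u, v⟩ := μ
  have eq_zero {m : Fin l → ℕ} (hm : ∑ i, m i = 0) : m = 0 := by
    simpa [funext_iff] using hm
  have hlen : (∑ i, u i = 0 ∧ ∑ i, v i = 0) ∨ (∑ i, u i = 1 ∧ ∑ i, v i = 0) ∨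
      (∑ i, u i = 0 ∧ ∑ i, v i = 1) ∨ 2 ≤ ∑ i, u i + ∑ i, v i := by omega
  rcases hlen with ⟨hu, hv⟩ | ⟨hu, hv⟩ | ⟨hu, hv⟩ | hlen
  · exact .inl (by rw [eq_zero hu, eq_zero hv, Prod.mk_zero_zero])
  · obtain ⟨s, rfl⟩ := exists_eq_single_of_sum_eq_one hu
    exact .inr (.inl ⟨s, by rw [eq_zero hv]⟩)
  · obtain ⟨s, rfl⟩ := exists_eq_single_of_sum_eq_one hv
    exact .inr (.inr (.inl ⟨s, by rw [eq_zero hu]⟩))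
  · refine .inr (.inr (.inr ?_))
    calc 2 * q ≤ (∑ i, u i + ∑ i, v i) * q := Nat.mul_le_mul_right q hlen
      _ ≤ monomialDegree q (u, v) := by
        simp only [monomialDegree, add_mul, mul_add]
        omega

@[simp]
lemma monomialDegree_zero (q : ℕ) : monomialDegree q (0 : (Fin l → ℕ) × (Fin l → ℕ)) = 0 := by
  simp [monomialDegree]

@[simp]
lemma monomialDegree_single_left (q : ℕ) (s : Fin l) :
    monomialDegree q (Pi.single s 1, 0) = q + 1 := by
  simp [monomialDegree]

@[simp]
lemma monomialDegree_single_right (q : ℕ) (s : Fin l) :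
    monomialDegree q (0, Pi.single s 1) = q := by
  simp [monomialDegree]

variable {B : Type} [Monoid B] (c w : Fin l → B)

@[simp]
lemma monomial_zero : monomial c w 0 = 1 := by
  simp [monomial]

lemma prod_map_finRange_pow_single (s : Fin l) :
    ((List.finRange l).map fun i ↦ c i ^ (Pi.single s 1 : Fin l → ℕ) i).prod = c s := by
  rw [List.prod_map_eq_pow_single s _ fun i hi _ ↦ by simp [hi],
    List.count_eq_one_of_mem (List.nodup_finRange l) (List.mem_finRange s)]
  simp

@[simp]
lemma monomial_single_left (s : Fin l) : monomial c w (Pi.single s 1, 0) = c s := by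
  simp [monomial, prod_map_finRange_pow_single]

@[simp]
lemma monomial_single_right (s : Fin l) : monomial c w (0, Pi.single s 1) = w s := by
  simp [monomial, prod_map_finRange_pow_single]

lemma monomial_mem {σ : Type*} [SetLike σ B] (ℬ : ℕ → σ) [SetLike.GradedMonoid ℬ] {q : ℕ}
    {c w : Fin l → B} (hc : ∀ i, c i ∈ ℬ (q + 1)) (hw : ∀ i, w i ∈ ℬ q)
    (μ : (Fin l → ℕ) × (Fin l → ℕ)) : monomial c w μ ∈ ℬ (monomialDegree q μ) := by
  rw [monomial, monomialDegree, Finset.sum_mul, Finset.sum_mul, Fin.sum_univ_def, Fin.sum_univ_def]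
  exact SetLike.mul_mem_graded
    (SetLike.list_prod_map_mem_graded _ _ _ fun i _ ↦ SetLike.pow_mem_graded _ (hc i))
    (SetLike.list_prod_map_mem_graded _ _ _ fun i _ ↦ SetLike.pow_mem_graded _ (hw i))

/-- The exponents of the monomials `1` (at `none`) and `c_s` (at `some s`), as indices of the
monomial basis. -/
def constOrCIdx (q : ℕ) : Option (Fin l) → MonIdx q l
  | none => ⟨0, by simp⟩
  | some s => ⟨(Pi.single s 1, 0), by simp [Pi.single_apply, apply_ite (· ≤ 1)]⟩

lemma constOrCIdx_injective (q : ℕ) : Function.Injective (constOrCIdx (l := l) q) := by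
  rintro (_ | s) (_ | t) h
  all_goals have hexp := congrFun (congrArg (fun μ : MonIdx q l ↦ μ.1.1) h)
  · rfl
  · simpa [constOrCIdx] using hexp t
  · simpa [constOrCIdx] using hexp s
  · simpa [constOrCIdx, Pi.single_apply] using hexp s

end Monomials

/-- `B` is the free graded extension `A ⊗ Λ(c₁,…,c_l,w₁,…,w_l)` of `A` along `j`, with `c_i` of
degree `q + 1` and `w_i` of degree `q`: the monomials in the `c_i` and `w_i` form a basis of `B`
as a left `A`-module. -/
structure IsFreeExtension {k A B : Type} [Field k] [Ring A] [Algebra k A] [Ring B] [Algebra k B]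
    (𝒜 : ℕ → Submodule k A) (ℬ : ℕ → Submodule k B) (q : ℕ) {l : ℕ} (j : A →ₐ[k] B)
    (c w : Fin l → B) : Prop where
  map_mem : ∀ i : ℕ, ∀ a ∈ 𝒜 i, j a ∈ ℬ i
  c_mem : ∀ i, c i ∈ ℬ (q + 1)
  w_mem : ∀ i, w i ∈ ℬ q
  existsUnique_sum : ∀ x : B, ∃! f : MonIdx q l →₀ A,
    (f.sum fun μ a ↦ j a * monomial c w μ.1) = x

/-- The products `j a * monomial c w μ` of total degree `m` with `a` homogeneous. -/
def gradedProducts {k A B : Type} [Field k] [Ring A] [Algebra k A] [Ring B] [Algebra k B]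
    (𝒜 : ℕ → Submodule k A) (q : ℕ) {l : ℕ} (j : A →ₐ[k] B) (c w : Fin l → B) (m : ℕ) : Set B :=
  {x | ∃ t μ, t + monomialDegree q μ = m ∧ ∃ a ∈ 𝒜 t, j a * monomial c w μ = x}

/-- The elements `j a + ∑ t_s c_s + ∑ j (r_s) w_s` with `a` of degree `m` and `r_s` of degree
`m - q`, where the scalars `t_s` vanish unless `m = q + 1`. -/
def linearForms {k A B : Type} [Field k] [Ring A] [Algebra k A] [Ring B] [Algebra k B]
    (𝒜 : ℕ → Submodule k A) (q : ℕ) {l : ℕ} (j : A →ₐ[k] B) (c w : Fin l → B) (m : ℕ) :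
    Submodule k B where
  carrier := {x | ∃ a ∈ 𝒜 m, ∃ (t : Fin l → k) (r : Fin l → A), (m ≠ q + 1 → t = 0) ∧
    (∀ s, r s ∈ 𝒜 (m - q)) ∧ x = j a + ∑ s, t s • c s + ∑ s, j (r s) * w s}
  zero_mem' := ⟨0, zero_mem _, 0, 0, fun _ ↦ rfl, fun _ ↦ zero_mem _, by simp⟩
  add_mem' := by
    rintro _ _ ⟨a, ha, t, r, ht, hr, rfl⟩ ⟨a', ha', t', r', ht', hr', rfl⟩
    refine ⟨a + a', add_mem ha ha', t + t', r + r', fun hne ↦ by simp [ht hne, ht' hne],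
      fun s ↦ add_mem (hr s) (hr' s), ?_⟩
    simp only [Pi.add_apply, map_add, add_mul, add_smul, Finset.sum_add_distrib]
    abel
  smul_mem' := by
    rintro y _ ⟨a, ha, t, r, ht, hr, rfl⟩
    refine ⟨y • a, Submodule.smul_mem _ y ha, y • t, y • r, fun hne ↦ by simp [ht hne],
      fun s ↦ Submodule.smul_mem _ y (hr s), ?_⟩
    simp only [Pi.smul_apply, map_smul, smul_mul_assoc, smul_assoc, smul_add, Finset.smul_sum]

section FreeExtension

variable {k A B : Type} [Field k] [Ring A] [Algebra k A] [Ring B] [Algebra k B]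
  {𝒜 : ℕ → Submodule k A} {ℬ : ℕ → Submodule k B}
  {d : A →ₗ[k] A} {D : B →ₗ[k] B} {n q l : ℕ} {ε : A →ₗ[k] k} {E : B →ₗ[k] k}
  {γ : Fin l → A} {j : A →ₐ[k] B} {c w : Fin l → B}

lemma gradedProducts_subset_linearForms (hconn : ∀ a ∈ 𝒜 0, ∃ r : k, a = r • (1 : A))
    (h1 : 𝒜 1 = ⊥) {m : ℕ} (hm : m < 2 * q) (hmq : m ≤ q + 2) :
    gradedProducts 𝒜 q j c w m ⊆ linearForms 𝒜 q j c w m := by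
  rintro _ ⟨i, μ, him, a, ha, rfl⟩
  rcases exponent_linear_or_le_monomialDegree q μ with rfl | ⟨s, rfl⟩ | ⟨s, rfl⟩ | hμ
  · rw [monomialDegree_zero, add_zero] at him
    exact ⟨a, him ▸ ha, 0, 0, fun _ ↦ rfl, fun _ ↦ zero_mem _, by simp⟩
  · rw [monomialDegree_single_left] at him
    obtain rfl | rfl : i = 0 ∨ i = 1 := by omega
    · obtain ⟨t, rfl⟩ := hconn a ha
      refine ⟨0, zero_mem _, Pi.single s t, 0, fun hne ↦ by omega, fun _ ↦ zero_mem _, ?_⟩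
      simp [Pi.single_apply, ite_smul]
    · rw [h1, Submodule.mem_bot] at ha
      simp [ha]
  · rw [monomialDegree_single_right] at him
    obtain rfl : i = m - q := by omega
    refine ⟨0, zero_mem _, 0, Pi.single s a, fun _ ↦ rfl, fun u ↦ ?_, ?_⟩
    · rw [Pi.single_apply]
      split_ifs
      exacts [ha, zero_mem _]
    · simp [Pi.single_apply, apply_ite j, ite_mul]
  · omega

namespace IsFreeExtension

lemma gradedProducts_subset [GradedRing ℬ] (hB : IsFreeExtension 𝒜 ℬ q j c w) (m : ℕ) :
    gradedProducts 𝒜 q j c w m ⊆ ℬ m := by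
  rintro _ ⟨t, μ, rfl, a, ha, rfl⟩
  exact SetLike.mul_mem_graded (hB.map_mem t a ha) (monomial_mem ℬ hB.c_mem hB.w_mem μ)

lemma iSup_span_gradedProducts [GradedRing 𝒜] (hB : IsFreeExtension 𝒜 ℬ q j c w) :
    ⨆ m, Submodule.span k (gradedProducts 𝒜 q j c w m) = ⊤ := by
  refine eq_top_iff.2 fun x _ ↦ ?_
  obtain ⟨f, rfl, -⟩ := hB.existsUnique_sum x
  refine Submodule.sum_mem _ fun μ _ ↦ ?_
  induction f μ using DirectSum.Decomposition.inductionOn 𝒜 with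
  | zero => simp
  | @homogeneous t a =>
    exact Submodule.mem_iSup_of_mem _ (Submodule.subset_span ⟨t, μ.1, rfl, a, a.2, rfl⟩)
  | add a b ha hb => simpa only [map_add, add_mul] using add_mem ha hb

lemma span_gradedProducts [GradedRing 𝒜] [GradedRing ℬ] (hB : IsFreeExtension 𝒜 ℬ q j c w)
    (m : ℕ) :
    Submodule.span k (gradedProducts 𝒜 q j c w m) = ℬ m := by
  have hind := (DirectSum.Decomposition.isInternal ℬ).submodule_iSupIndep
  have hle := fun i ↦ Submodule.span_le.2 (hB.gradedProducts_subset i)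
  exact congrFun ((hind.le_iff_eq_of_iSup_eq_top hB.iSup_span_gradedProducts).1 hle) m

lemma le_linearForms [GradedRing 𝒜] [GradedRing ℬ] (hB : IsFreeExtension 𝒜 ℬ q j c w)
    (hconn : ∀ a ∈ 𝒜 0, ∃ r : k, a = r • (1 : A)) (h1 : 𝒜 1 = ⊥) {m : ℕ} (hm : m < 2 * q)
    (hmq : m ≤ q + 2) : ℬ m ≤ linearForms 𝒜 q j c w m :=
  hB.span_gradedProducts m ▸
    Submodule.span_le.2 (gradedProducts_subset_linearForms hconn h1 hm hmq)

lemma eq_zero_of_map_add_sum_mul_c (hB : IsFreeExtension 𝒜 ℬ q j c w) {a : A} {r : Fin l → A}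
    (h : j a + ∑ s, j (r s) * c s = 0) : a = 0 ∧ r = 0 := by
  let _ : Module A B := Module.compHom B (j : A →+* B)
  have hbasis : LinearIndependent A fun μ : MonIdx q l ↦ monomial c w μ.1 :=
    linearIndependent_iff.2 fun f hf ↦ (hB.existsUnique_sum 0).unique hf Finsupp.sum_zero_index
  have hzero := Fintype.linearIndependent_iff.1 (hbasis.comp _ (constOrCIdx_injective q))
    (fun o ↦ o.elim a r) (by
      rw [Fintype.sum_option]
      change j a * monomial c w 0 + ∑ s, j (r s) * monomial c w (Pi.single s 1, 0) = 0
      simpa only [monomial_zero, mul_one, monomial_single_left] using h)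
  exact ⟨hzero none, funext fun s ↦ hzero (some s)⟩

lemma mem_orphans_of_mul_eq_zero [GradedRing 𝒜] [GradedRing ℬ]
    (hB : IsFreeExtension 𝒜 ℬ q j c w)
    (hconn : ∀ a ∈ 𝒜 0, ∃ r : k, a = r • (1 : A))
    (hq : 0 < q) (hE : ∀ m : ℕ, m ≠ n → ∀ x ∈ ℬ m, E x = 0) {m : ℕ} (hm : n ≤ m + q) {y : B}
    (hy : y ∈ ℬ m) (hyj : ∀ a, E (y * j a) = 0) (hyw : ∀ s, E (y * w s) = 0) : y ∈ Orphans E := by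
  have hdeg {i : ℕ} {x : B} (hx : x ∈ ℬ i) (hi : n < m + i) : E (y * x) = 0 :=
    hE _ (by omega) _ (SetLike.mul_mem_graded hy hx)
  suffices htop : ⊤ ≤ LinearMap.ker (E ∘ₗ LinearMap.mulLeft k y) from
    (mem_orphans E y).2 fun x ↦ htop (Submodule.mem_top (x := x))
  rw [← hB.iSup_span_gradedProducts]
  refine iSup_le fun i ↦ Submodule.span_le.2 fun x hx ↦ ?_
  have hxi := hB.gradedProducts_subset i hx
  obtain ⟨t, μ, rfl, a, ha, rfl⟩ := hx
  change E (y * (j a * monomial c w μ)) = 0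
  rcases exponent_linear_or_le_monomialDegree q μ with rfl | ⟨s, rfl⟩ | ⟨s, rfl⟩ | hμ
  · simpa using hyj a
  · exact hdeg hxi (by rw [monomialDegree_single_left]; omega)
  · obtain rfl | ht := Nat.eq_zero_or_pos t
    · obtain ⟨r, rfl⟩ := hconn a ha
      simp [hyw]
    · exact hdeg hxi (by rw [monomialDegree_single_right]; omega)
  · exact hdeg hxi (by omega)

lemma c_mem_orphans [GradedRing 𝒜] [GradedRing ℬ] (hB : IsFreeExtension 𝒜 ℬ q j c w)
    (hconn : ∀ a ∈ 𝒜 0, ∃ r : k, a = r • (1 : A)) (hq : 0 < q)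
    (hn : n ≤ 2 * q) (hE : ∀ m : ℕ, m ≠ n → ∀ x ∈ ℬ m, E x = 0) {s : Fin l}
    (hEc : ∀ a, E (c s * j a) = 0) : c s ∈ Orphans E :=
  hB.mem_orphans_of_mul_eq_zero hconn hq hE (by omega) (hB.c_mem s) hEc fun u ↦
    hE _ (by omega) _ (SetLike.mul_mem_graded (hB.c_mem s) (hB.w_mem u))

lemma map_mem_orphans [GradedRing 𝒜] [GradedRing ℬ] (hB : IsFreeExtension 𝒜 ℬ q j c w)
    (hconn : ∀ a ∈ 𝒜 0, ∃ r : k, a = r • (1 : A)) (hq : 0 < q)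
    (hE : ∀ m : ℕ, m ≠ n → ∀ x ∈ ℬ m, E x = 0) (hEj : ∀ a, E (j a) = ε a) {m : ℕ}
    (hm : n ≤ m + q) {a : A} (ha : a ∈ 𝒜 m) (hao : a ∈ Orphans ε)
    (haw : ∀ s, E (j a * w s) = 0) : j a ∈ Orphans E := by
  refine hB.mem_orphans_of_mul_eq_zero hconn hq hE hm (hB.map_mem m a ha) (fun b ↦ ?_) haw
  rw [← map_mul, hEj]
  exact (mem_orphans ε a).1 hao b

end IsFreeExtension

lemma map_eq_zero_of_degree_le_two [GradedRing 𝒜] (hd : IsDifferential 𝒜 d)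
    (hconn : ∀ a ∈ 𝒜 0, ∃ r : k, a = r • (1 : A)) (h1 : 𝒜 1 = ⊥) (h2 : ∀ a ∈ 𝒜 2, d a = 0)
    {i : ℕ} (hi : i ≤ 2) {a : A} (ha : a ∈ 𝒜 i) : d a = 0 := by
  obtain rfl | rfl | rfl : i = 0 ∨ i = 1 ∨ i = 2 := by omega
  · have hd1 : d 1 = 0 := by simpa using hd.leibniz 0 1 1 SetLike.GradedOne.one_mem
    obtain ⟨r, rfl⟩ := hconn a ha
    rw [map_smul, hd1, smul_zero]
  · rw [(Submodule.eq_bot_iff _).1 h1 a ha, map_zero]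
  · exact h2 a ha

lemma differential_c (hD : IsDifferential ℬ D) (hDj : ∀ a, D (j a) = j (d a))
    (hDw : ∀ i, D (w i) = c i - j (γ i)) (i : Fin l) : D (c i) = j (d (γ i)) := by
  rw [← hDj, ← sub_eq_zero, ← map_sub, ← hDw, hD.d_sq]

lemma exists_eq_map_add_sum_c_of_cocycle (hB : IsFreeExtension 𝒜 ℬ q j c w)
    (hD : IsDifferential ℬ D) (hDj : ∀ a, D (j a) = j (d a))
    (hDw : ∀ i, D (w i) = c i - j (γ i)) {m : ℕ} (hd : ∀ a ∈ 𝒜 (m - q), d a = 0) {x : B}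
    (hx : x ∈ linearForms 𝒜 q j c w m) (hDx : D x = 0) :
    ∃ a ∈ 𝒜 m, ∃ t : Fin l → k, (m ≠ q + 1 → t = 0) ∧ d (a + ∑ s, t s • γ s) = 0 ∧
      x = j a + ∑ s, t s • c s := by
  obtain ⟨a, ha, t, r, ht, hr, rfl⟩ := hx
  let r' : Fin l → A := fun s ↦ (-1 : k) ^ (m - q) • r s
  have hDrw (s : Fin l) : D (j (r s) * w s) = j (r' s) * (c s - j (γ s)) := by
    rw [hD.leibniz _ _ _ (hB.map_mem _ _ (hr s)), hDj, hd _ (hr s), map_zero, zero_mul, zero_add,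
      hDw, map_smul, smul_mul_assoc]
  have hDx' : j (d (a + ∑ s, t s • γ s) - ∑ s, r' s * γ s) + ∑ s, j (r' s) * c s = 0 := by
    rw [← hDx]
    simp only [map_add, map_sub, map_sum, map_smul, map_mul, hDj, differential_c hD hDj hDw, hDrw,
      mul_sub, Finset.sum_sub_distrib]
    abel
  obtain ⟨hda, hr'⟩ := hB.eq_zero_of_map_add_sum_mul_c hDx'
  have hr0 (s : Fin l) : r s = 0 := by
    simpa [r'] using congrFun hr' s
  exact ⟨a, ha, t, ht, by simpa [hr'] using hda, by simp [hr0]⟩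

lemma exists_eq_map_of_orphan_cocycle (hB : IsFreeExtension 𝒜 ℬ q j c w)
    (hD : IsDifferential ℬ D) (hDj : ∀ a, D (j a) = j (d a))
    (hDw : ∀ i, D (w i) = c i - j (γ i)) {m : ℕ} (hd : ∀ a ∈ 𝒜 (m - q), d a = 0)
    (hind : ∀ (t : Fin l → k) (b : A), b ∈ Orphans ε → b ∈ 𝒜 (q + 1) →
      ∑ i, t i • d (γ i) = d b → ∀ i, t i = 0)
    (hEj : ∀ a, E (j a) = ε a) (hEc : ∀ i a, E (c i * j a) = 0) {x : B}
    (hx : x ∈ linearForms 𝒜 q j c w m) (hDx : D x = 0) (hxo : x ∈ Orphans E) :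
    ∃ a ∈ Orphans ε, a ∈ 𝒜 m ∧ d a = 0 ∧ x = j a := by
  obtain ⟨a, ha, t, ht, hda, rfl⟩ := exists_eq_map_add_sum_c_of_cocycle hB hD hDj hDw hd hx hDx
  have hao : a ∈ Orphans ε := (mem_orphans ε a).2 fun b ↦ by
    simpa [add_mul, Finset.sum_mul, hEc, ← map_mul, hEj] using (mem_orphans E _).1 hxo (j b)
  have ht0 : t = 0 := by
    by_cases hm : m = q + 1
    · subst hm
      refine funext (hind t (-a) (neg_mem hao) (neg_mem ha) ?_)
      rw [map_neg]
      exact eq_neg_of_add_eq_zero_right (by simpa using hda)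
    · exact ht hm
  subst ht0
  exact ⟨a, hao, ha, by simpa using hda, by simp⟩

lemma exists_homogeneous_mem_of_mem_sup_ker [GradedRing 𝒜] (hd : IsDifferential 𝒜 d)
    {Z : Submodule k A} (hZ : ∀ z ∈ Z, ∀ i : ℕ, (DirectSum.decompose 𝒜 z i : A) ∈ Z)
    {b : A} (hb : b ∈ Z ⊔ LinearMap.ker d) {m : ℕ} (hdb : d b ∈ 𝒜 (m + 1)) :
    ∃ z ∈ Z, z ∈ 𝒜 m ∧ d z = d b := by
  obtain ⟨z, hz, y, hy, rfl⟩ := Submodule.mem_sup.1 hb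
  rw [map_add, LinearMap.mem_ker.1 hy, add_zero] at hdb ⊢
  refine ⟨DirectSum.decompose 𝒜 z m, hZ z hz m, Subtype.prop _, ?_⟩
  rw [← coe_decompose_map_add_degree 𝒜 𝒜 d hd.grade, DirectSum.decompose_of_mem_same 𝒜 hdb]

end FreeExtension

theorem half_acyclicity_extends_general {k A B : Type} [Field k] [Ring A] [Algebra k A] [Ring B]
    [Algebra k B] {𝒜 : ℕ → Submodule k A} [GradedRing 𝒜] {ℬ : ℕ → Submodule k B} [GradedRing ℬ]
    {d : A →ₗ[k] A} {D : B →ₗ[k] B} {n q l : ℕ} {ε : A →ₗ[k] k} {E : B →ₗ[k] k}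
    (hd : IsDifferential 𝒜 d) (hℬ : GradedComm ℬ) (hD : IsDifferential ℬ D)
    (hconn : ∀ a ∈ 𝒜 0, ∃ r : k, a = r • (1 : A)) (h1 : 𝒜 1 = ⊥) (h2 : ∀ a ∈ 𝒜 2, d a = 0)
    (hq : 3 ≤ q) (hn : n ≤ 2 * q) {γ : Fin l → A}
    (hspan : ∀ a : A, a ∈ Orphans ε → a ∈ 𝒜 (q + 2) → d a = 0 →
      ∃ (b : A) (t : Fin l → k), b ∈ Orphans ε ∧ b ∈ 𝒜 (q + 1) ∧ a = d b + ∑ i, t i • d (γ i))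
    (hind : ∀ (t : Fin l → k) (b : A), b ∈ Orphans ε → b ∈ 𝒜 (q + 1) →
      ∑ i, t i • d (γ i) = d b → ∀ i, t i = 0)
    {Z : Submodule k A} (hZo : Z ≤ Orphans ε) (hZd : Orphans ε ≤ Z ⊔ LinearMap.ker d)
    (hZ : ∀ z ∈ Z, ∀ i : ℕ, (DirectSum.decompose 𝒜 z i : A) ∈ Z)
    {j : A →ₐ[k] B} {c w : Fin l → B} (hB : IsFreeExtension 𝒜 ℬ q j c w)
    (hDj : ∀ a, D (j a) = j (d a)) (hDw : ∀ i, D (w i) = c i - j (γ i))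
    (hE : ∀ m : ℕ, m ≠ n → ∀ x ∈ ℬ m, E x = 0) (hEj : ∀ a, E (j a) = ε a)
    (hEc : ∀ i a, E (c i * j a) = 0) (hEwZ : ∀ i, ∀ z ∈ Z, E (w i * j z) = 0)
    (hha : OrphansHalfAcyclic 𝒜 d n ε (q + 1)) :
    OrphansHalfAcyclic ℬ D n E (q + 2) := by
  intro m hnm hm x hxo hxm hDx
  have hlow : ∀ a ∈ 𝒜 (m - q), d a = 0 := fun _ ↦
    map_eq_zero_of_degree_le_two hd hconn h1 h2 (by omega)
  obtain ⟨a, hao, ham, hda, rfl⟩ := exists_eq_map_of_orphan_cocycle hB hD hDj hDw hlow hind hEj hEc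
    (hB.le_linearForms hconn h1 (by omega) hm hxm) hDx hxo
  obtain rfl | hm : m = q + 2 ∨ m ≤ q + 1 := by omega
  · obtain ⟨b, t, hbo, hbm, rfl⟩ := hspan a hao ham hda
    have hbw (s : Fin l) : E (j b * w s) = 0 :=
      hE _ (by omega) _ (SetLike.mul_mem_graded (hB.map_mem _ b hbm) (hB.w_mem s))
    refine ⟨j b + ∑ s, t s • c s, add_mem ?_ (sum_mem fun s _ ↦ Submodule.smul_mem _ _ ?_),
      add_mem (hB.map_mem _ b hbm) (sum_mem fun s _ ↦ Submodule.smul_mem _ _ (hB.c_mem s)), ?_⟩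
    · exact hB.map_mem_orphans hconn (by omega) hE hEj (by omega) hbm hbo hbw
    · exact hB.c_mem_orphans hconn (by omega) hn hE (hEc s)
    · simp only [map_add, map_sum, map_smul, hDj, differential_c hD hDj hDw]
  · obtain ⟨b, hbo, -, rfl⟩ := hha m hnm hm a hao ham hda
    obtain ⟨i, rfl⟩ : ∃ i, m = i + 1 := ⟨m - 1, by omega⟩
    obtain ⟨z, hz, hzi, hdz⟩ := exists_homogeneous_mem_of_mem_sup_ker hd hZ (hZd hbo) ham
    have hzw (s : Fin l) : E (j z * w s) = 0 := by
      rw [hℬ.mul_comm i q _ _ (hB.map_mem i z hzi) (hB.w_mem s), map_smul, hEwZ s z hz, smul_zero]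
    exact ⟨j z, hB.map_mem_orphans hconn (by omega) hE hEj (by omega) hzi (hZo hz) hzw,
      hB.map_mem i z hzi, by rw [hDj, hdz]⟩

/-- if `k ≥ n/2 + 2` (with `k = q + 2`) and the orphan ideal `O` of
`(A,d,ε)` is `(k−1)`-half-acyclic, then the orphan ideal `Ô` of `(Â,d̂,ε̂)` is
`k`-half-acyclic. -/
theorem half_acyclicity_extends {k A B : Type} [Field k] [Ring A] [Algebra k A] [Ring B] [Algebra k B]
    (𝒜 : ℕ → Submodule k A) [GradedRing 𝒜] (ℬ : ℕ → Submodule k B) [GradedRing ℬ]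
    (d : A →ₗ[k] A) (D : B →ₗ[k] B) (n q l : ℕ)
    (ε : A →ₗ[k] k) (E : B →ₗ[k] k)
    (hgcA : GradedComm 𝒜) (hdA : IsDifferential 𝒜 d)
    (hgcB : GradedComm ℬ) (hdB : IsDifferential ℬ D)
    (hft : ∀ i : ℕ, FiniteDimensional k (𝒜 i))
    (hconn : ∀ a ∈ 𝒜 0, ∃ r : k, a = r • (1 : A))
    (h1 : 𝒜 1 = ⊥) (h2 : ∀ a ∈ 𝒜 2, d a = 0)
    (hn : 7 ≤ n) (hk : n + 2 ≤ 2 * (q + 2))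
    (hor : IsOrientation 𝒜 d n ε) (hpd : CohomologyPD 𝒜 d n ε)
    (α γ : Fin l → A)
    (hαm : ∀ i, α i ∈ 𝒜 (q + 2)) (hαz : ∀ i, d (α i) = 0) (hαo : ∀ i, α i ∈ Orphans ε)
    (hspan : ∀ a : A, a ∈ Orphans ε → a ∈ 𝒜 (q + 2) → d a = 0 →
      ∃ (b : A) (cf : Fin l → k), b ∈ Orphans ε ∧ b ∈ 𝒜 (q + 1) ∧ a = d b + ∑ i, cf i • α i)
    (hind : ∀ (cf : Fin l → k) (b : A), b ∈ Orphans ε → b ∈ 𝒜 (q + 1) →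
      (∑ i, cf i • α i) = d b → ∀ i, cf i = 0)
    (hγm : ∀ i, γ i ∈ 𝒜 (q + 1)) (hγd : ∀ i, d (γ i) = α i)
    (hγperp : ∀ (i : Fin l) (z : A), d z = 0 → ε (γ i * z) = 0)
    (T Z : Submodule k A)
    (hT : IsCompl T (LinearMap.range d)) (hγT : ∀ i, γ i ∈ T)
    (hZo : Z ≤ Orphans ε)
    (hZdisj : Z ⊓ (Orphans ε ⊓ LinearMap.range d) = ⊥)
    (hZsup : Z ⊔ (Orphans ε ⊓ LinearMap.range d) = Orphans ε)
    (hZT : Z ≤ T)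
    (hZgr : ∀ z ∈ Z, ∀ i : ℕ, ((DirectSum.decompose 𝒜 z i : 𝒜 i) : A) ∈ Z)
    (j : A →ₐ[k] B) (hjgr : ∀ i : ℕ, ∀ a ∈ 𝒜 i, j a ∈ ℬ i)
    (hjch : ∀ a : A, D (j a) = j (d a))
    (c w : Fin l → B) (hcm : ∀ i, c i ∈ ℬ (q + 1)) (hwm : ∀ i, w i ∈ ℬ q)
    (hDc : ∀ i, D (c i) = j (α i)) (hDw : ∀ i, D (w i) = c i - j (γ i))
    (hcase : CharZero k ∨ Odd (q + 2))
    (hfree : ∀ x : B, ∃! f : MonIdx q l →₀ A,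
      (f.sum fun μ a => j a * monomial c w μ.1) = x)
    (hEj : ∀ a : A, E (j a) = ε a)
    (hEwd : ∀ (i : Fin l) (ξ : A), E (w i * j (d ξ)) = ((-1 : k) ^ (q + 2)) * ε (γ i * ξ))
    (hEcc : ∀ i i' : Fin l, E (c i * c i') = - ε (γ i * γ i'))
    (hEw : ∀ i : Fin l, E (w i) = 0)
    (hEwT : ∀ (i : Fin l) (t : A), t ∈ T → E (w i * j t) = 0)
    (hEc : ∀ i : Fin l, E (c i) = 0)
    (hEcj : ∀ (i : Fin l) (ξ : A), E (c i * j ξ) = 0)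
    (hEccj : ∀ (i i' : Fin l) (ξ : A), E (c i * c i' * j ξ) = 0)
    (hEcw : ∀ i i' : Fin l, E (c i * w i') = 0)
    (hEcwj : ∀ (i i' : Fin l) (ξ : A), E (c i * w i' * j ξ) = 0)
    (hEww : ∀ i i' : Fin l, E (w i * w i') = 0)
    (hEwwj : ∀ (i i' : Fin l) (ξ : A), E (w i * w i' * j ξ) = 0)
    (hEhom : ∀ m : ℕ, m ≠ n → ∀ x ∈ ℬ m, E x = 0)
    (hk2 : n + 4 ≤ 2 * (q + 2))
    (hha : OrphansHalfAcyclic 𝒜 d n ε (q + 1)) :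
    OrphansHalfAcyclic ℬ D n E (q + 2) := by
  have hdd : d ∘ₗ d = 0 := LinearMap.ext hdA.d_sq
  exact half_acyclicity_extends_general hdA hgcB hdB hconn h1 h2 (by omega) (by omega)
    (by simpa only [hγd] using hspan) (by simpa only [hγd] using hind) hZo
    (hZsup ▸ sup_le_sup_left (inf_le_right.trans (LinearMap.range_le_ker_iff.2 hdd)) Z) hZgr
    ⟨hjgr, hcm, hwm, hfree⟩ hjch hDw hEhom hEj hEcj (fun i z hz ↦ hEwT i z (hZT hz)) hha

end PDCDGA
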